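/- The function f is strictly monotonically increasing on (0, ∞). -/

import Mathlib

open Real MeasureTheory

/-!
Write `s = √(x⁴+1)` and `I(x) = ∫_x^∞ dt/√(t⁴+1)`. Differentiating and using `s² = x⁴+1` gives
`f'(x) = (4/3) g(x)` with `g(x) = I(x) - 2x(s - x²)`. Further,
`g'(x) = (6x²s - 6x⁴ - 3)/s < 0`, because `(2x²s)² = (2x⁴+1)² - 1`. Since
`I(x) → 0` and `2x(s - x²) = 2x/(s + x²) → 0` at infinity, the strictly decreasing `g` has
limit `0`, so `g > 0` and `f` is strictly increasing.
-/

/-- The metric function `f` of the Einstein-Born-Infeld black hole: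
`f(x) = (2/3)*(x^4 - x^2*sqrt(x^4+1)) + (4/3)*x*(integral of 1/sqrt(t^4+1) over (x,oo))`. -/
noncomputable def f (x : ℝ) : ℝ :=
  (2 / 3) * (x ^ 4 - x ^ 2 * Real.sqrt (x ^ 4 + 1))
    + (4 / 3) * x * ∫ t in Set.Ioi x, 1 / Real.sqrt (t ^ 4 + 1)

/-- The tail integral `∫_x^∞ dt/√(t⁴+1)`. -/
noncomputable def tail (x : ℝ) : ℝ := ∫ t in Set.Ioi x, 1 / Real.sqrt (t ^ 4 + 1)

/-- The function `g = (3/4) f'`. -/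
noncomputable def slope_fn (x : ℝ) : ℝ :=
  tail x - 2 * x * (Real.sqrt (x ^ 4 + 1) - x ^ 2)

lemma sqrt_quartic_pos (x : ℝ) : 0 < Real.sqrt (x ^ 4 + 1) := by positivity

lemma sq_sqrt_quartic (x : ℝ) : Real.sqrt (x ^ 4 + 1) ^ 2 = x ^ 4 + 1 :=
  Real.sq_sqrt (by positivity)

lemma continuous_integrand : Continuous fun t : ℝ => 1 / Real.sqrt (t ^ 4 + 1) :=
  continuous_const.div (by fun_prop) fun t => (sqrt_quartic_pos t).ne'

/-- Comparison with `2/(1+t²)`. -/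
lemma integrable_integrand : Integrable fun t : ℝ => 1 / Real.sqrt (t ^ 4 + 1) := by
  refine (integrable_inv_one_add_sq.const_mul 2).mono'
    continuous_integrand.aestronglyMeasurable (Filter.Eventually.of_forall fun t => ?_)
  have hs := sqrt_quartic_pos t
  rw [Real.norm_of_nonneg (by positivity), ← div_eq_mul_inv, div_le_div_iff₀ hs (by positivity)]
  have h : 1 + t ^ 2 ≤ 2 * Real.sqrt (t ^ 4 + 1) := by
    refine abs_le_of_sq_le_sq' ?_ (by positivity) |>.2
    rw [mul_pow, sq_sqrt_quartic]
    nlinarith [sq_nonneg (t ^ 2 - 1), sq_nonneg (t ^ 2)]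
  linarith

lemma tail_eq (x : ℝ) : tail x = tail 0 - ∫ t in (0 : ℝ)..x, 1 / Real.sqrt (t ^ 4 + 1) := by
  have := intervalIntegral.integral_Ioi_sub_Ioi' (a := 0) (b := x) (μ := volume)
    integrable_integrand.integrableOn integrable_integrand.integrableOn
  unfold tail
  linarith

lemma hasDerivAt_tail (x : ℝ) : HasDerivAt tail (-(1 / Real.sqrt (x ^ 4 + 1))) x := by
  have h := (continuous_integrand.integral_hasStrictDerivAt 0 x).hasDerivAt.const_sub (tail 0)
  exact h.congr_of_eventuallyEq (Filter.Eventually.of_forall tail_eq)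

lemma tendsto_tail : Filter.Tendsto tail Filter.atTop (nhds 0) := by
  have h := (intervalIntegral_tendsto_integral_Ioi 0 integrable_integrand.integrableOn
    Filter.tendsto_id).const_sub (tail 0)
  have h0 : tail 0 - (∫ t in Set.Ioi (0 : ℝ), 1 / Real.sqrt (t ^ 4 + 1)) = 0 := sub_self _
  rw [h0] at h
  exact h.congr fun x => (tail_eq x).symm

lemma hasDerivAt_sqrt_quartic (x : ℝ) :
    HasDerivAt (fun y : ℝ => Real.sqrt (y ^ 4 + 1)) (2 * x ^ 3 / Real.sqrt (x ^ 4 + 1)) x := by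
  have h := ((hasDerivAt_pow 4 x).add_const 1).sqrt (by positivity)
  refine h.congr_deriv ?_
  have := (sqrt_quartic_pos x).ne'
  push_cast
  field_simp
  norm_num
  ring

lemma hasDerivAt_slope_fn (x : ℝ) :
    HasDerivAt slope_fn
      ((6 * x ^ 2 * Real.sqrt (x ^ 4 + 1) - 6 * x ^ 4 - 3) / Real.sqrt (x ^ 4 + 1)) x := by
  have h := (hasDerivAt_tail x).sub
    (((hasDerivAt_id x).const_mul 2).mul ((hasDerivAt_sqrt_quartic x).sub (hasDerivAt_pow 2 x)))
  refine h.congr_deriv ?_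
  have hs := (sqrt_quartic_pos x).ne'
  have hq := sq_sqrt_quartic x
  simp only [Pi.sub_apply, id]
  push_cast
  field_simp
  linear_combination (-2) * hq

lemma slope_fn_strictAnti : StrictAnti slope_fn := by
  refine strictAnti_of_deriv_neg fun x => ?_
  rw [(hasDerivAt_slope_fn x).deriv]
  have hs := sqrt_quartic_pos x
  have hq := sq_sqrt_quartic x
  refine div_neg_of_neg_of_pos ?_ hs
  have h : 2 * x ^ 2 * Real.sqrt (x ^ 4 + 1) < 2 * x ^ 4 + 1 := by
    refine lt_of_pow_lt_pow_left₀ 2 (by positivity) ?_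
    rw [mul_pow, hq]
    nlinarith
  linarith

lemma tendsto_slope_fn : Filter.Tendsto slope_fn Filter.atTop (nhds 0) := by
  have h : Filter.Tendsto (fun x : ℝ => 2 * x * (Real.sqrt (x ^ 4 + 1) - x ^ 2))
      Filter.atTop (nhds 0) := by
    -- For `x > 0` the expression lies between `0` and `1/x`, as `√(x⁴+1) ≤ x² + 1/(2x²)`.
    refine squeeze_zero' ?_ ?_ tendsto_inv_atTop_zero
    · filter_upwards [Filter.eventually_gt_atTop 0] with x hx
      have : x ^ 2 ≤ Real.sqrt (x ^ 4 + 1) := Real.le_sqrt_of_sq_le (by nlinarith)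
      have := sub_nonneg.2 this
      positivity
    · filter_upwards [Filter.eventually_gt_atTop 0] with x hx
      have hb : Real.sqrt (x ^ 4 + 1) ≤ x ^ 2 + 1 / (2 * x ^ 2) := by
        refine Real.sqrt_le_iff.2 ⟨by positivity, ?_⟩
        have : (x ^ 2 + 1 / (2 * x ^ 2)) ^ 2 = x ^ 4 + 1 + (1 / (2 * x ^ 2)) ^ 2 := by
          field_simp
          ring
        rw [this]
        exact le_add_of_nonneg_right (by positivity)
      calc 2 * x * (Real.sqrt (x ^ 4 + 1) - x ^ 2) ≤ 2 * x * (1 / (2 * x ^ 2)) := by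
            gcongr
            linarith
        _ = x⁻¹ := by field_simp
  have h' := tendsto_tail.sub h
  rw [sub_zero] at h'
  exact h'

lemma slope_fn_pos (x : ℝ) : 0 < slope_fn x :=
  (slope_fn_strictAnti.antitone.le_of_tendsto tendsto_slope_fn (x + 1)).trans_lt
    (slope_fn_strictAnti (lt_add_one x))

lemma hasDerivAt_f (x : ℝ) : HasDerivAt f (4 / 3 * slope_fn x) x := by
  have h := (((hasDerivAt_pow 4 x).sub
    ((hasDerivAt_pow 2 x).mul (hasDerivAt_sqrt_quartic x))).const_mul (2 / 3)).add
    (((hasDerivAt_id x).const_mul (4 / 3)).mul (hasDerivAt_tail x))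
  refine (h.congr_of_eventuallyEq (f₁ := f)
    (Filter.Eventually.of_forall fun _ => rfl)).congr_deriv ?_
  have hs := (sqrt_quartic_pos x).ne'
  have hq := sq_sqrt_quartic x
  simp only [id, slope_fn]
  push_cast
  field_simp
  linear_combination 4 * x * hq

/-- `f` is strictly monotonically increasing on `(0, oo)`. -/
theorem f_strictMonoOn : StrictMonoOn f (Set.Ioi (0 : ℝ)) := by
  have h : StrictMono f := by
    refine strictMono_of_deriv_pos fun x => ?_
    rw [(hasDerivAt_f x).deriv]
    have := slope_fn_pos x
    positivity
  exact h.strictMonoOn _
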